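/- arXiv:2110.06174 — 2 statements merged into one kernel-verified Lean document; each statement's English description precedes it below -/
import Mathlib

section
/- Suppose γ : ℝ → ℝ⁶ is a solution of the Hamiltonian system associated to the regularized Hamiltonian Γ (with fixed energy E < 0) satisfying, for some τ > 0 and some a, b, c, d ∈ ℝ, γ(0) = (0, a, b, √2, −c, d) and γ(2τ) = (b, 0, a, d, −√2, −c). Then γ satisfies γ(s + 2τ) = S_f γ(s) for all s ∈ ℝ, and consequently γ is 12τ-periodic: γ(s + 12τ) = γ(s) for all s ∈ ℝ. -/
/-!
The Hamiltonian vector field of `Γ` is not `C¹` where the radicands vanish. Each singular term of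
`Γ` is however a polynomial times a function that is homogeneous of degree two and smooth off the
origin; the derivative of such a function is homogeneous of degree one, hence Lipschitz, so the
field is locally Lipschitz and its integral curves are determined by one value. Since `Γ` is
invariant under the symplectic matrix `S_f`, the curves `γ(· + 2τ)` and `S_f γ` solve the same
system; they agree at `0`, hence everywhere. Finally `S_f³ = -1`, so `S_f⁶ = 1`.
-/

/-- The regularized Hamiltonian `Γ` of the eight-body cubic configuration, with fixed
energy `E`, as a function of `x = (Q₁,Q₂,Q₃,P₁,P₂,P₃) ∈ ℝ⁶`. -/
noncomputable def cubicGamma (E : ℝ) (x : Fin 6 → ℝ) : ℝ :=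
  (x 3) ^ 2 * (x 1) ^ 2 * (x 2) ^ 2 + (x 0) ^ 2 * (x 4) ^ 2 * (x 2) ^ 2 +
      (x 0) ^ 2 * (x 1) ^ 2 * (x 5) ^ 2
    - 2 * (x 0) ^ 2 * (x 1) ^ 2 * (x 2) ^ 2 / Real.sqrt ((x 0) ^ 4 + (x 1) ^ 4 + (x 2) ^ 4)
    - 2 * (x 0) ^ 2 * (x 1) ^ 2 * (x 2) ^ 2 / Real.sqrt ((x 0) ^ 4 + (x 1) ^ 4)
    - 2 * (x 0) ^ 2 * (x 1) ^ 2 * (x 2) ^ 2 / Real.sqrt ((x 0) ^ 4 + (x 2) ^ 4)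
    - 2 * (x 0) ^ 2 * (x 1) ^ 2 * (x 2) ^ 2 / Real.sqrt ((x 1) ^ 4 + (x 2) ^ 4)
    - 2 * (x 1) ^ 2 * (x 2) ^ 2 - 2 * (x 0) ^ 2 * (x 2) ^ 2 - 2 * (x 0) ^ 2 * (x 1) ^ 2
    - E * (x 0) ^ 2 * (x 1) ^ 2 * (x 2) ^ 2

/-- The index in `Fin 6` of the coordinate `Qᵢ`. -/
def Qidx (i : Fin 3) : Fin 6 := ⟨i.val, by omega⟩

/-- The index in `Fin 6` of the coordinate `Pᵢ`. -/
def Pidx (i : Fin 3) : Fin 6 := ⟨i.val + 3, by omega⟩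

/-- Partial derivative of `f : ℝ⁶ → ℝ` with respect to the `i`-th coordinate at `x`. -/
noncomputable def pderiv6 (f : (Fin 6 → ℝ) → ℝ) (i : Fin 6) (x : Fin 6 → ℝ) : ℝ :=
  deriv (fun t => f (Function.update x i t)) (x i)

/-- `γ : ℝ → ℝ⁶` is a solution of the Hamiltonian system associated to `Γ` (energy `E`):
`Qᵢ′(s) = ∂Γ/∂Pᵢ(γ(s))` and `Pᵢ′(s) = −∂Γ/∂Qᵢ(γ(s))` for `i = 1,2,3`. -/
def IsCubicSol (E : ℝ) (γ : ℝ → Fin 6 → ℝ) : Prop :=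
  ∀ s : ℝ, ∀ i : Fin 3,
    HasDerivAt (fun u => γ u (Qidx i)) (pderiv6 (cubicGamma E) (Pidx i) (γ s)) s ∧
    HasDerivAt (fun u => γ u (Pidx i)) (-pderiv6 (cubicGamma E) (Qidx i) (γ s)) s

/-- The time-preserving symmetry matrix `S_f = diag(R, R)`, `R = [[0,0,1],[−1,0,0],[0,1,0]]`. -/
def Sf : Matrix (Fin 6) (Fin 6) ℝ :=
  !![0, 0, 1, 0, 0, 0;
     -1, 0, 0, 0, 0, 0;
     0, 1, 0, 0, 0, 0;
     0, 0, 0, 0, 0, 1;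
     0, 0, 0, -1, 0, 0;
     0, 0, 0, 0, 1, 0]

/-- The time-reversing symmetry matrix `S_r = diag(S, −S)`, `S = [[0,1,0],[1,0,0],[0,0,1]]`. -/
def Sr : Matrix (Fin 6) (Fin 6) ℝ :=
  !![0, 1, 0, 0, 0, 0;
     1, 0, 0, 0, 0, 0;
     0, 0, 1, 0, 0, 0;
     0, 0, 0, 0, -1, 0;
     0, 0, 0, -1, 0, 0;
     0, 0, 0, 0, 0, -1]

open Set Topology
open scoped NNReal Matrix

section Homogeneous

/-- Positive homogeneity of degree `k`: scaling the argument by `t > 0` scales the value by `t ^ k`.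
Nonpositive `t` are excluded, so that functions such as norms are covered. -/
def IsPosHomogeneous {V F : Type*} [SMul ℝ V] [SMul ℝ F] (k : ℕ) (f : V → F) : Prop :=
  ∀ ⦃t : ℝ⦄, 0 < t → ∀ x, f (t • x) = t ^ k • f x

variable {V F : Type*} [NormedAddCommGroup V] [NormedSpace ℝ V]
  [NormedAddCommGroup F] [NormedSpace ℝ F] {k : ℕ} {f : V → F}

namespace IsPosHomogeneous

lemma map_zero (hf : IsPosHomogeneous k f) (hk : k ≠ 0) : f 0 = 0 := by
  have h : f 0 = (2 : ℝ) ^ k • f 0 := by simpa using hf two_pos 0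
  have h2 : (2 : ℝ) ^ k - 1 ≠ 0 := (sub_pos.2 (one_lt_pow₀ one_lt_two hk)).ne'
  have h0 : ((2 : ℝ) ^ k - 1) • f 0 = 0 := by rw [sub_smul, one_smul, ← h, sub_self]
  exact (smul_eq_zero.1 h0).resolve_left h2

protected lemma fderiv (hf : IsPosHomogeneous (k + 1) f) : IsPosHomogeneous k (fderiv ℝ f) := by
  intro t ht x
  have h : t • fderiv ℝ f (t • x) = t ^ (k + 1) • fderiv ℝ f x := by
    rw [← fderiv_comp_smul, ← Pi.smul_apply, ← fderiv_const_smul_field]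
    exact congrArg (fderiv ℝ · x) (funext (hf ht))
  rw [pow_succ', mul_smul] at h
  exact smul_right_injective _ ht.ne' h

variable [ProperSpace V]

lemma exists_norm_le (hf : IsPosHomogeneous k f) (hc : ∀ x ≠ 0, ContinuousAt f x) :
    ∃ C : ℝ≥0, ∀ x ≠ 0, ‖f x‖ ≤ C * ‖x‖ ^ k := by
  obtain ⟨C, hC⟩ := (isCompact_sphere (0 : V) 1).exists_bound_of_continuousOn (f := f)
    fun u hu ↦ (hc u (ne_zero_of_mem_unit_sphere ⟨u, hu⟩)).continuousWithinAt
  refine ⟨C.toNNReal, fun x hx ↦ ?_⟩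
  have hpos : 0 < ‖x‖ := norm_pos_iff.2 hx
  have hunit : ‖x‖⁻¹ • x ∈ Metric.sphere (0 : V) 1 := by simp [norm_smul, hpos.ne']
  calc ‖f x‖ = ‖f (‖x‖ • ‖x‖⁻¹ • x)‖ := by rw [smul_inv_smul₀ hpos.ne']
    _ = ‖f (‖x‖⁻¹ • x)‖ * ‖x‖ ^ k := by rw [hf hpos, norm_smul, norm_pow, norm_norm, mul_comm]
    _ ≤ C.toNNReal * ‖x‖ ^ k := by gcongr; exact (hC _ hunit).trans C.le_coe_toNNReal

lemma exists_norm_fderiv_le (hf : IsPosHomogeneous 1 f) (hd : ∀ x ≠ 0, ContDiffAt ℝ 1 f x) :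
    ∃ C : ℝ≥0, ∀ x ≠ 0, ‖fderiv ℝ f x‖ ≤ C := by
  simpa using hf.fderiv.exists_norm_le fun x hx ↦ (hd x hx).continuousAt_fderiv one_ne_zero

lemma exists_lipschitzWith (hf : IsPosHomogeneous 1 f) (hd : ∀ x ≠ 0, ContDiffAt ℝ 1 f x) :
    ∃ K, LipschitzWith K f := by
  obtain ⟨C, hC⟩ := hf.exists_norm_le fun x hx ↦ (hd x hx).continuousAt
  obtain ⟨D, hD⟩ := hf.exists_norm_fderiv_le hd
  have hC' : ∀ x, ‖f x‖ ≤ C * ‖x‖ := by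
    intro x
    obtain rfl | hx := eq_or_ne x 0
    · simp [hf.map_zero one_ne_zero]
    · simpa using hC x hx
  refine ⟨max C D, LipschitzWith.of_dist_le_mul fun x y ↦ ?_⟩
  by_cases h0 : (0 : V) ∈ segment ℝ x y
  · have hxy : ‖x‖ + ‖y‖ = dist x y := by simpa using (mem_segment_iff_wbtw.1 h0).dist_add_dist
    calc dist (f x) (f y) ≤ ‖f x‖ + ‖f y‖ := dist_le_norm_add_norm _ _
      _ ≤ C * ‖x‖ + C * ‖y‖ := add_le_add (hC' x) (hC' y)
      _ = C * dist x y := by rw [← mul_add, hxy]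
      _ ≤ (max C D : ℝ≥0) * dist x y := by gcongr; exact le_max_left C D
  · have hne : ∀ z ∈ segment ℝ x y, z ≠ 0 := fun z hz h ↦ h0 (h ▸ hz)
    have hmvt : ‖f x - f y‖ ≤ D * ‖x - y‖ :=
      (convex_segment x y).norm_image_sub_le_of_norm_fderiv_le (𝕜 := ℝ)
        (fun z hz ↦ (hd z (hne z hz)).differentiableAt one_ne_zero) (fun z hz ↦ hD z (hne z hz))
        (right_mem_segment ℝ x y) (left_mem_segment ℝ x y)
    rw [dist_eq_norm, dist_eq_norm]
    exact hmvt.trans (by gcongr; exact le_max_right C D)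

lemma differentiable (hf : IsPosHomogeneous (k + 2) f) (hd : ∀ x ≠ 0, DifferentiableAt ℝ f x) :
    Differentiable ℝ f := by
  intro x
  obtain rfl | hx := eq_or_ne x 0
  · obtain ⟨C, hC⟩ := hf.exists_norm_le fun x hx ↦ (hd x hx).continuousAt
    have hbig : f =O[𝓝 0] fun x ↦ ‖x - 0‖ ^ (k + 2) := by
      refine Asymptotics.IsBigO.of_bound C (Filter.Eventually.of_forall fun x ↦ ?_)
      obtain rfl | hx := eq_or_ne x 0
      · simp [hf.map_zero (by lia)]
      · simpa using hC x hx
    exact (hbig.hasFDerivAt (𝕜 := ℝ) (by lia)).differentiableAt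
  · exact hd x hx

end IsPosHomogeneous

end Homogeneous

section LocallyC11

lemma locallyLipschitz_comp_prodMk {X V W F : Type*} [PseudoEMetricSpace X]
    [NormedAddCommGroup V] [NormedSpace ℝ V] [NormedAddCommGroup W] [NormedSpace ℝ W]
    [NormedAddCommGroup F] [NormedSpace ℝ F] {φ : V × W → F} (hφ : ContDiff ℝ 1 φ)
    {f : X → V} {g : X → W} (hf : LocallyLipschitz f) (hg : LocallyLipschitz g) :
    LocallyLipschitz fun x ↦ φ (f x, g x) :=
  hφ.locallyLipschitz.comp (hf.prodMk hg)

variable {V W F : Type*} [NormedAddCommGroup V] [NormedSpace ℝ V] [NormedAddCommGroup W]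
  [NormedSpace ℝ W] [NormedAddCommGroup F] [NormedSpace ℝ F]

/-- Functions of class `C^{1,1}_loc`: differentiable with locally Lipschitz derivative. This is the
regularity of a Hamiltonian that makes its vector field locally Lipschitz. -/
structure LocallyC11 (f : V → F) : Prop where
  differentiable : Differentiable ℝ f
  locallyLipschitz_fderiv : LocallyLipschitz (fderiv ℝ f)

namespace LocallyC11

lemma of_contDiff {f : V → F} (hf : ContDiff ℝ 2 f) : LocallyC11 f where
  differentiable := hf.differentiable two_ne_zero
  locallyLipschitz_fderiv := (hf.fderiv_right (m := 1) (by norm_num)).locallyLipschitz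

lemma of_isPosHomogeneous [ProperSpace V] {f : V → F} (hf : IsPosHomogeneous 2 f)
    (hd : ∀ x ≠ 0, ContDiffAt ℝ 2 f x) : LocallyC11 f where
  differentiable := hf.differentiable fun x hx ↦ (hd x hx).differentiableAt two_ne_zero
  locallyLipschitz_fderiv :=
    have ⟨_, hK⟩ := hf.fderiv.exists_lipschitzWith
      fun x hx ↦ (hd x hx).fderiv_right (m := 1) (by norm_num)
    hK.locallyLipschitz

lemma comp {g : W → F} {f : V → W} (hg : LocallyC11 g) (hf : LocallyC11 f) :
    LocallyC11 fun x ↦ g (f x) where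
  differentiable := hg.differentiable.comp hf.differentiable
  locallyLipschitz_fderiv := by
    have hfLip : LocallyLipschitz f :=
      (contDiff_one_iff_fderiv.2
        ⟨hf.differentiable, hf.locallyLipschitz_fderiv.continuous⟩).locallyLipschitz
    have hchain : fderiv ℝ (fun x ↦ g (f x)) = fun x ↦ (fderiv ℝ g (f x)).comp (fderiv ℝ f x) :=
      funext fun x ↦ fderiv_fun_comp x (hg.differentiable _) (hf.differentiable _)
    rw [hchain]
    exact locallyLipschitz_comp_prodMk isBoundedBilinearMap_comp.contDiff
      (hg.locallyLipschitz_fderiv.comp hfLip) hf.locallyLipschitz_fderiv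

lemma prodMk {f : V → W} {g : V → F} (hf : LocallyC11 f) (hg : LocallyC11 g) :
    LocallyC11 fun x ↦ (f x, g x) where
  differentiable := hf.differentiable.prodMk hg.differentiable
  locallyLipschitz_fderiv := by
    have hpair : fderiv ℝ (fun x ↦ (f x, g x)) = fun x ↦ (fderiv ℝ f x).prod (fderiv ℝ g x) :=
      funext fun x ↦ (hf.differentiable x).fderiv_prodMk (hg.differentiable x)
    rw [hpair]
    exact locallyLipschitz_comp_prodMk (ContinuousLinearMap.prodₗᵢ ℝ).contDiff
      hf.locallyLipschitz_fderiv hg.locallyLipschitz_fderiv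

lemma sub {f g : V → F} (hf : LocallyC11 f) (hg : LocallyC11 g) :
    LocallyC11 fun x ↦ f x - g x :=
  (of_contDiff (contDiff_fst.sub contDiff_snd)).comp (hf.prodMk hg)

lemma mul {f g : V → ℝ} (hf : LocallyC11 f) (hg : LocallyC11 g) :
    LocallyC11 fun x ↦ f x * g x :=
  (of_contDiff (contDiff_fst.mul contDiff_snd)).comp (hf.prodMk hg)

end LocallyC11

end LocallyC11

section IntegralCurve

variable {V : Type*} [NormedAddCommGroup V] [NormedSpace ℝ V] {X : V → V} {α β : ℝ → V}

theorem isIntegralCurve_eq_of_locallyLipschitz (hX : LocallyLipschitz X)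
    (hα : IsIntegralCurve α fun _ ↦ X) (hβ : IsIntegralCurve β fun _ ↦ X) {t₀ : ℝ}
    (h : α t₀ = β t₀) : α = β := by
  ext t
  obtain ⟨A, B, ht, ht₀⟩ : ∃ A B, t ∈ Ioo A B ∧ t₀ ∈ Ioo A B :=
    ⟨min t t₀ - 1, max t t₀ + 1, by grind, by grind⟩
  have hcompact : IsCompact (α '' Icc A B ∪ β '' Icc A B) :=
    (isCompact_Icc.image hα.continuous).union (isCompact_Icc.image hβ.continuous)
  obtain ⟨K, hK⟩ := hX.locallyLipschitzOn.exists_lipschitzOnWith_of_compact hcompact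
  exact ODE_solution_unique_of_mem_Ioo (fun _ _ ↦ hK) ht₀
    (fun s hs ↦ ⟨hα s, .inl (mem_image_of_mem α (Ioo_subset_Icc_self hs))⟩)
    (fun s hs ↦ ⟨hβ s, .inr (mem_image_of_mem β (Ioo_subset_Icc_self hs))⟩) h ht

theorem apply_add_eq_of_equivariant (hX : LocallyLipschitz X) (L : V →L[ℝ] V)
    (hL : ∀ x, X (L x) = L (X x)) (hα : IsIntegralCurve α fun _ ↦ X) {t₀ T : ℝ}
    (h : α (t₀ + T) = L (α t₀)) (s : ℝ) : α (s + T) = L (α s) := by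
  have hLα : IsIntegralCurve (L ∘ α) fun _ ↦ X := fun t ↦ by
    simpa only [Function.comp_apply, hL] using L.hasFDerivAt.comp_hasDerivAt t (hα t)
  exact congrFun (isIntegralCurve_eq_of_locallyLipschitz hX (hα.comp_add T) hLα h) s

end IntegralCurve

section HamiltonianField

/-- The Poisson matrix `J = [[0, 1], [-1, 0]]` of `ℝ⁶` in the coordinates `(Q, P)`, for which the
Hamiltonian vector field of `H` is `J ∇H`. -/
def poissonMatrix : Matrix (Fin 6) (Fin 6) ℝ :=
  !![0, 0, 0, 1, 0, 0;
     0, 0, 0, 0, 1, 0;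
     0, 0, 0, 0, 0, 1;
     -1, 0, 0, 0, 0, 0;
     0, -1, 0, 0, 0, 0;
     0, 0, -1, 0, 0, 0]

/-- The vector of partial derivatives of `H : ℝ⁶ → ℝ`. -/
noncomputable def grad6 (H : (Fin 6 → ℝ) → ℝ) (x : Fin 6 → ℝ) : Fin 6 → ℝ :=
  fun i ↦ pderiv6 H i x

/-- The Hamiltonian vector field `(∂H/∂P, -∂H/∂Q)` of `H` on `ℝ⁶`. -/
noncomputable def hamiltonianField (H : (Fin 6 → ℝ) → ℝ) (x : Fin 6 → ℝ) : Fin 6 → ℝ :=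
  poissonMatrix *ᵥ grad6 H x

variable {H : (Fin 6 → ℝ) → ℝ}

lemma pderiv6_eq_fderiv {x : Fin 6 → ℝ} (hH : DifferentiableAt ℝ H x) (i : Fin 6) :
    pderiv6 H i x = fderiv ℝ H x (Pi.single i 1) := by
  rw [← Function.update_eq_self i x] at hH
  have h := hH.hasFDerivAt.comp_hasDerivAt (x i) (hasDerivAt_update x i (x i))
  rw [Function.update_eq_self] at h
  exact h.deriv

lemma LocallyC11.locallyLipschitz_grad6 (hH : LocallyC11 H) : LocallyLipschitz (grad6 H) := by
  have heval : grad6 H = ContinuousLinearMap.pi (fun i ↦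
      ContinuousLinearMap.apply ℝ ℝ (Pi.single i 1 : Fin 6 → ℝ)) ∘ fderiv ℝ H :=
    funext fun x ↦ funext fun i ↦ pderiv6_eq_fderiv (hH.differentiable x) i
  rw [heval]
  exact (ContinuousLinearMap.lipschitz _).locallyLipschitz.comp hH.locallyLipschitz_fderiv

lemma LocallyC11.locallyLipschitz_hamiltonianField (hH : LocallyC11 H) :
    LocallyLipschitz (hamiltonianField H) :=
  (Matrix.toLin' poissonMatrix).toContinuousLinearMap.lipschitz.locallyLipschitz.comp
    hH.locallyLipschitz_grad6

lemma transpose_mulVec_grad6 (hH : Differentiable ℝ H) {S : Matrix (Fin 6) (Fin 6) ℝ}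
    (hS : ∀ x, H (S *ᵥ x) = H x) (x : Fin 6 → ℝ) : Sᵀ *ᵥ grad6 H (S *ᵥ x) = grad6 H x := by
  ext i
  let L := (Matrix.toLin' S).toContinuousLinearMap
  have hchain : fderiv ℝ H x = (fderiv ℝ H (S *ᵥ x)).comp L := by
    have h := fderiv_comp x (hH (L x)) L.differentiableAt
    rwa [L.fderiv, show H ∘ L = H from funext hS] at h
  have hbasis : S *ᵥ Pi.single i 1 = ∑ j, S j i • (Pi.single j 1 : Fin 6 → ℝ) := by
    rw [Matrix.mulVec_single_one]
    exact pi_eq_sum_univ' _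
  calc (Sᵀ *ᵥ grad6 H (S *ᵥ x)) i
      = ∑ j, S j i * fderiv ℝ H (S *ᵥ x) (Pi.single j 1) := by
        simp only [Matrix.mulVec, dotProduct, Matrix.transpose_apply, grad6,
          pderiv6_eq_fderiv (hH _)]
    _ = fderiv ℝ H (S *ᵥ x) (S *ᵥ Pi.single i 1) := by
        simp only [hbasis, map_sum, map_smul, smul_eq_mul]
    _ = fderiv ℝ H x (Pi.single i 1) := by rw [hchain]; rfl
    _ = grad6 H x i := (pderiv6_eq_fderiv (hH x) i).symm

lemma hamiltonianField_mulVec (hH : Differentiable ℝ H) {S : Matrix (Fin 6) (Fin 6) ℝ}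
    (hsymp : S * poissonMatrix * Sᵀ = poissonMatrix) (hS : ∀ x, H (S *ᵥ x) = H x)
    (x : Fin 6 → ℝ) : hamiltonianField H (S *ᵥ x) = S *ᵥ hamiltonianField H x := by
  calc poissonMatrix *ᵥ grad6 H (S *ᵥ x)
      = S *ᵥ poissonMatrix *ᵥ Sᵀ *ᵥ grad6 H (S *ᵥ x) := by
        simp only [Matrix.mulVec_mulVec, ← mul_assoc, hsymp]
    _ = S *ᵥ poissonMatrix *ᵥ grad6 H x := by rw [transpose_mulVec_grad6 hH hS]

theorem apply_add_eq_mulVec_of_hamiltonian (hH : LocallyC11 H) {S : Matrix (Fin 6) (Fin 6) ℝ}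
    (hsymp : S * poissonMatrix * Sᵀ = poissonMatrix) (hS : ∀ x, H (S *ᵥ x) = H x)
    {γ : ℝ → Fin 6 → ℝ} (hγ : IsIntegralCurve γ fun _ ↦ hamiltonianField H) {t₀ T : ℝ}
    (h : γ (t₀ + T) = S *ᵥ γ t₀) (s : ℝ) : γ (s + T) = S *ᵥ γ s :=
  apply_add_eq_of_equivariant hH.locallyLipschitz_hamiltonianField
    (Matrix.toLin' S).toContinuousLinearMap (hamiltonianField_mulVec hH.differentiable hsymp hS)
    hγ h s

end HamiltonianField

lemma apply_add_nat_mul_eq_pow_mulVec {n : Type*} [Fintype n] [DecidableEq n] {R : Type*}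
    [Semiring R] {S : Matrix n n R} {γ : ℝ → n → R} {T : ℝ}
    (h : ∀ s, γ (s + T) = S *ᵥ γ s) (k : ℕ) (s : ℝ) : γ (s + k * T) = S ^ k *ᵥ γ s := by
  induction k with
  | zero => simp
  | succ k ih =>
    rw [Nat.cast_succ, add_one_mul, ← add_assoc, h, ih, Matrix.mulVec_mulVec, pow_succ']

section Cubic

/-- The common shape of the singular terms of `cubicGamma`; the terms with only two positions under
the square root are its values at `x = 0`. It vanishes at the origin, by `0 / 0 = 0`. -/
noncomputable def interaction : ℝ × ℝ × ℝ → ℝ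
  | (x, y, z) => y ^ 2 * z ^ 2 / √(x ^ 4 + y ^ 4 + z ^ 4)

lemma isPosHomogeneous_interaction : IsPosHomogeneous 2 interaction := by
  rintro t ht ⟨x, y, z⟩
  have hsqrt : √((t * x) ^ 4 + (t * y) ^ 4 + (t * z) ^ 4) = t ^ 2 * √(x ^ 4 + y ^ 4 + z ^ 4) := by
    rw [← Real.sqrt_sq (sq_nonneg t), ← Real.sqrt_mul (by positivity)]
    ring_nf
  simp only [interaction, Prod.smul_mk, smul_eq_mul, hsqrt]
  rw [show (t * y) ^ 2 * (t * z) ^ 2 = t ^ 2 * (t ^ 2 * (y ^ 2 * z ^ 2)) by ring,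
    mul_div_mul_left _ _ (by positivity), mul_div_assoc]

lemma contDiffAt_interaction {p : ℝ × ℝ × ℝ} (hp : p ≠ 0) : ContDiffAt ℝ 2 interaction p := by
  have hpos : 0 < p.1 ^ 4 + p.2.1 ^ 4 + p.2.2 ^ 4 := by
    contrapose! hp
    have := Even.pow_nonneg (n := 4) (by decide) p.1
    have := Even.pow_nonneg (n := 4) (by decide) p.2.1
    have := Even.pow_nonneg (n := 4) (by decide) p.2.2
    ext <;> exact pow_eq_zero_iff four_ne_zero |>.1 (by linarith)
  exact ContDiffAt.div (by fun_prop) (ContDiffAt.sqrt (by fun_prop) hpos.ne')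
    (Real.sqrt_pos.2 hpos).ne'

lemma locallyC11_interaction : LocallyC11 interaction :=
  .of_isPosHomogeneous isPosHomogeneous_interaction fun _ ↦ contDiffAt_interaction

lemma cubicGamma_eq (E : ℝ) (x : Fin 6 → ℝ) :
    cubicGamma E x =
      x 3 ^ 2 * x 1 ^ 2 * x 2 ^ 2 + x 0 ^ 2 * x 4 ^ 2 * x 2 ^ 2 + x 0 ^ 2 * x 1 ^ 2 * x 5 ^ 2
        - 2 * x 1 ^ 2 * x 2 ^ 2 - 2 * x 0 ^ 2 * x 2 ^ 2 - 2 * x 0 ^ 2 * x 1 ^ 2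
        - E * x 0 ^ 2 * x 1 ^ 2 * x 2 ^ 2
      - 2 * x 0 ^ 2 * interaction (x 0, x 1, x 2) - 2 * x 2 ^ 2 * interaction (0, x 0, x 1)
      - 2 * x 1 ^ 2 * interaction (0, x 0, x 2) - 2 * x 0 ^ 2 * interaction (0, x 1, x 2) := by
  simp only [cubicGamma, interaction, zero_pow four_ne_zero, zero_add]
  ring

lemma locallyC11_cubicGamma (E : ℝ) : LocallyC11 (cubicGamma E) := by
  rw [funext (cubicGamma_eq E)]
  have hterm {q : (Fin 6 → ℝ) → ℝ} {p : (Fin 6 → ℝ) → ℝ × ℝ × ℝ} (hq : ContDiff ℝ 2 q)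
      (hp : ContDiff ℝ 2 p) : LocallyC11 fun x ↦ q x * interaction (p x) :=
    (LocallyC11.of_contDiff hq).mul (locallyC11_interaction.comp (.of_contDiff hp))
  refine ((((LocallyC11.of_contDiff ?_).sub (hterm ?_ ?_)).sub (hterm ?_ ?_)).sub
    (hterm ?_ ?_)).sub (hterm ?_ ?_) <;> fun_prop

lemma Sf_mulVec (x : Fin 6 → ℝ) : Sf *ᵥ x = ![x 2, -x 0, x 1, x 5, -x 3, x 4] := by
  ext i
  fin_cases i <;> simp [Sf, Matrix.mulVec, dotProduct, Fin.sum_univ_six]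

lemma cubicGamma_Sf_mulVec (E : ℝ) (x : Fin 6 → ℝ) : cubicGamma E (Sf *ᵥ x) = cubicGamma E x := by
  simp only [cubicGamma, Sf_mulVec, Matrix.cons_val, neg_sq, Even.neg_pow (by decide : Even 4)]
  ring_nf

lemma Sf_mul_poissonMatrix_mul_transpose : Sf * poissonMatrix * Sfᵀ = poissonMatrix := by
  ext i j
  fin_cases i <;> fin_cases j <;>
    simp [Sf, poissonMatrix, Matrix.mul_apply, Fin.sum_univ_six]

lemma Sf_pow_three : Sf ^ 3 = -1 := by
  refine Matrix.mulVec_injective (funext fun x ↦ ?_)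
  ext i
  fin_cases i <;> simp [pow_three, ← Matrix.mulVec_mulVec, Sf_mulVec, Matrix.neg_mulVec]

lemma Sf_pow_six : Sf ^ 6 = 1 := by
  rw [pow_mul Sf 3 2, Sf_pow_three, neg_one_sq]

lemma IsCubicSol.isIntegralCurve {E : ℝ} {γ : ℝ → Fin 6 → ℝ} (hγ : IsCubicSol E γ) :
    IsIntegralCurve γ fun _ ↦ hamiltonianField (cubicGamma E) := by
  intro s
  rw [hasDerivAt_pi]
  intro i
  have hfield : hamiltonianField (cubicGamma E) (γ s) i = ![pderiv6 (cubicGamma E) 3 (γ s),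
    pderiv6 (cubicGamma E) 4 (γ s), pderiv6 (cubicGamma E) 5 (γ s),
    -pderiv6 (cubicGamma E) 0 (γ s), -pderiv6 (cubicGamma E) 1 (γ s),
    -pderiv6 (cubicGamma E) 2 (γ s)] i := by
    fin_cases i <;> simp [hamiltonianField, poissonMatrix, Matrix.mulVec, dotProduct, grad6,
      Fin.sum_univ_six]
  refine HasDerivAt.congr_deriv ?_ hfield.symm
  fin_cases i
  exacts [(hγ s 0).1, (hγ s 1).1, (hγ s 2).1, (hγ s 0).2, (hγ s 1).2, (hγ s 2).2]

end Cubic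

theorem cubic_periodic_orbit_general_general {E : ℝ} {γ : ℝ → Fin 6 → ℝ} (hγ : IsCubicSol E γ)
    {t₀ T : ℝ} (h : γ (t₀ + T) = Sf *ᵥ γ t₀) :
    (∀ s, γ (s + T) = Sf *ᵥ γ s) ∧ Function.Periodic γ (6 * T) := by
  have hshift : ∀ s, γ (s + T) = Sf *ᵥ γ s :=
    apply_add_eq_mulVec_of_hamiltonian (locallyC11_cubicGamma E)
      Sf_mul_poissonMatrix_mul_transpose (cubicGamma_Sf_mulVec E) hγ.isIntegralCurve h
  exact ⟨hshift, fun s ↦ by simpa [Sf_pow_six] using apply_add_nat_mul_eq_pow_mulVec hshift 6 s⟩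

/-- If a solution `γ` of the regularized Hamiltonian system (with energy `E < 0`) satisfies
`γ(0) = (0, a, b, √2, −c, d)` and `γ(2τ) = (b, 0, a, d, −√2, −c)` for some `τ > 0`, then
`γ(s + 2τ) = S_f γ(s)` for all `s`, and `γ` is `12τ`-periodic. -/
theorem cubic_periodic_orbit_general (E a b c d τ : ℝ) (hE : E < 0) (hτ : 0 < τ)
    (γ : ℝ → Fin 6 → ℝ) (hγ : IsCubicSol E γ)
    (h0 : γ 0 = ![0, a, b, Real.sqrt 2, -c, d])
    (h2 : γ (2 * τ) = ![b, 0, a, d, -Real.sqrt 2, -c]) :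
    (∀ s : ℝ, γ (s + 2 * τ) = Sf.mulVec (γ s)) ∧
    (∀ s : ℝ, γ (s + 12 * τ) = γ s) := by
  have h := cubic_periodic_orbit_general_general hγ (t₀ := 0) (T := 2 * τ)
    (by simp [h0, h2, Sf_mulVec])
  exact ⟨h.1, (show 12 * τ = 6 * (2 * τ) by ring) ▸ h.2⟩
end

section
/- Let γ be a T-periodic solution of the Hamiltonian system ẋ = J∇Γ(x) and let S be a 2n×2n real matrix such that: (1) there exists N ∈ ℕ, N ≥ 1, with γ(−s + T/N) = S γ(s) for all s; (2) Γ(Sx) = Γ(x) for all x; (3) SJ = −JS; (4) S is orthogonal. Then the fundamental matrix solution X of the linearization along γ satisfies X(−s + T/N) = S X(s) Sᵀ X(T/N) for all s ∈ ℝ. -/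
open Matrix

/-- The standard `2n × 2n` symplectic matrix `J = [[0, I],[−I, 0]]`, with the index set
`Fin n ⊕ Fin n` (first summand: configuration coordinates, second: momenta). -/
def stdJ (n : ℕ) : Matrix (Fin n ⊕ Fin n) (Fin n ⊕ Fin n) ℝ :=
  Matrix.fromBlocks 0 1 (-1) 0

/-- The gradient of `f : ℝ^ι → ℝ` at `x`, componentwise via the Fréchet derivative. -/
noncomputable def gradV {ι : Type} [Fintype ι] [DecidableEq ι]
    (f : (ι → ℝ) → ℝ) (x : ι → ℝ) : ι → ℝ :=
  fun i => fderiv ℝ f x (Pi.single i 1)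

/-- The Hessian matrix `D²f(x)` of `f : ℝ^ι → ℝ` at `x`. -/
noncomputable def hessM {ι : Type} [Fintype ι] [DecidableEq ι]
    (f : (ι → ℝ) → ℝ) (x : ι → ℝ) : Matrix ι ι ℝ :=
  Matrix.of fun i j => fderiv ℝ (fun y => fderiv ℝ f y (Pi.single j 1)) x (Pi.single i 1)

/-!
Differentiating `Γ ∘ S = Γ` twice gives `Sᵀ D²Γ(Sx) S = D²Γ(x)`. Since `S` is orthogonal and
`S J = -J S`, also `S J Sᵀ = -J`, and the two identities say that `S` intertwines the coefficient
`A(s) = J D²Γ(γ(s))` of the linearization with `-A(c - s)`, where `c = T / N`. Hence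
`s ↦ X(c - s)` and `s ↦ S X(s) S⁻¹ X(c)` both solve `Y' = -A(c - s) Y`; they agree at `s = 0`, so
they are equal by uniqueness of solutions.
-/

section LinearODE

theorem eq_of_hasDerivAt_clm_apply {E : Type*} [NormedAddCommGroup E] [NormedSpace ℝ E]
    {A : ℝ → E →L[ℝ] E} (hA : Continuous A) {y z : ℝ → E}
    (hy : ∀ t, HasDerivAt y (A t (y t)) t) (hz : ∀ t, HasDerivAt z (A t (z t)) t)
    {t₀ : ℝ} (h₀ : y t₀ = z t₀) : y = z := by
  ext t
  obtain ⟨a, b, ht, ht₀⟩ : ∃ a b, t ∈ Set.Ioo a b ∧ t₀ ∈ Set.Ioo a b :=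
    ⟨min t t₀ - 1, max t t₀ + 1, by grind, by grind⟩
  obtain ⟨K, hK⟩ := isCompact_Icc.exists_bound_of_continuousOn (hA.continuousOn (s := Set.Icc a b))
  have hLip : ∀ u ∈ Set.Ioo a b, LipschitzOnWith K.toNNReal (A u) Set.univ := fun u hu ↦
    ((A u).lipschitz.weaken <| NNReal.coe_le_coe.1 <|
      (hK u (Set.Ioo_subset_Icc_self hu)).trans (Real.le_coe_toNNReal K)).lipschitzOnWith
  exact ODE_solution_unique_of_mem_Ioo hLip ht₀ (fun u _ ↦ ⟨hy u, trivial⟩)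
    (fun u _ ↦ ⟨hz u, trivial⟩) h₀ ht

variable {R : Type*} [NormedRing R] [NormedAlgebra ℝ R]

theorem eq_of_hasDerivAt_mul {a : ℝ → R} (ha : Continuous a) {y z : ℝ → R}
    (hy : ∀ t, HasDerivAt y (a t * y t) t) (hz : ∀ t, HasDerivAt z (a t * z t) t)
    {t₀ : ℝ} (h₀ : y t₀ = z t₀) : y = z :=
  eq_of_hasDerivAt_clm_apply (A := fun t ↦ ContinuousLinearMap.mul ℝ R (a t))
    ((ContinuousLinearMap.mul ℝ R).continuous.comp ha) hy hz h₀

theorem apply_const_sub_eq_of_time_reversing {a X : ℝ → R} (ha : Continuous a)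
    (hX : ∀ t, HasDerivAt X (a t * X t) t) (hX0 : X 0 = 1) {c : ℝ} {s r : R} (hsr : s * r = 1)
    (hs : ∀ t, s * a t = -(a (c - t) * s)) (t : ℝ) :
    X (c - t) = s * X t * r * X c := by
  have hleft : ∀ t, HasDerivAt (fun u ↦ X (c - u)) (-a (c - t) * X (c - t)) t := fun t ↦
    neg_mul (a (c - t)) _ ▸ (hX (c - t)).comp_const_sub c t
  have hright : ∀ t, HasDerivAt (fun u ↦ s * X u * r * X c)
      (-a (c - t) * (s * X t * r * X c)) t := fun t ↦ by
    have hcoeff : s * (a t * X t) * r * X c = -a (c - t) * (s * X t * r * X c) := by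
      simp only [← mul_assoc, hs, neg_mul]
    exact hcoeff ▸ (((hX t).const_mul s).mul_const r).mul_const (X c)
  have hzero : X (c - 0) = s * X 0 * r * X c := by simp [hX0, hsr]
  have ha' : Continuous fun t ↦ -a (c - t) := (ha.comp (continuous_const.sub continuous_id)).neg
  exact congrFun (eq_of_hasDerivAt_mul ha' hleft hright hzero) t

end LinearODE

theorem hasDerivAt_matrix {m n : Type*} [Finite m] [Finite n] {X : ℝ → Matrix m n ℝ}
    {X' : Matrix m n ℝ} {t : ℝ} :
    HasDerivAt X X' t ↔ ∀ i j, HasDerivAt (fun u ↦ X u i j) (X' i j) t := by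
  cases nonempty_fintype m
  cases nonempty_fintype n
  exact hasDerivAt_pi.trans <| forall_congr' fun _ ↦ hasDerivAt_pi

section Hessian

theorem fderiv_fderiv_comp_clm {𝕜 E F G : Type*} [NontriviallyNormedField 𝕜]
    [NormedAddCommGroup E] [NormedSpace 𝕜 E] [NormedAddCommGroup F] [NormedSpace 𝕜 F]
    [NormedAddCommGroup G] [NormedSpace 𝕜 G] {f : F → G} (hf : ContDiff 𝕜 2 f) (L : E →L[𝕜] F)
    (x u v : E) :
    fderiv 𝕜 (fderiv 𝕜 (f ∘ L)) x u v = fderiv 𝕜 (fderiv 𝕜 f) (L x) (L u) (L v) := by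
  have h := congrArg (· ![u, v]) (L.iteratedFDeriv_comp_right hf x (i := 2) le_rfl)
  simpa [iteratedFDeriv_two_apply] using h

variable {ι κ : Type} [Fintype ι] [DecidableEq ι] [Fintype κ] [DecidableEq κ]

theorem hessM_eq_toMatrix₂' {f : (ι → ℝ) → ℝ} (hf : ContDiff ℝ 2 f) (x : ι → ℝ) :
    hessM f x = LinearMap.toMatrix₂' ℝ (fderiv ℝ (fderiv ℝ f) x).toLinearMap₁₂ := by
  have hdiff : DifferentiableAt ℝ (fderiv ℝ f) x :=
    (hf.fderiv_right (m := 1) (by norm_num)).differentiable one_ne_zero x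
  ext i j
  simp [hessM, fderiv_clm_apply hdiff (differentiableAt_const _)]

theorem continuous_hessM {f : (ι → ℝ) → ℝ} (hf : ContDiff ℝ 2 f) : Continuous (hessM f) := by
  have hcont : Continuous (fderiv ℝ (fderiv ℝ f)) :=
    (hf.fderiv_right (m := 1) (by norm_num)).continuous_fderiv one_ne_zero
  refine continuous_matrix fun i j ↦ ?_
  simp only [hessM_eq_toMatrix₂' hf, LinearMap.toMatrix₂'_apply,
    ContinuousLinearMap.toLinearMap₁₂_apply_apply_apply]
  exact (hcont.clm_apply continuous_const).clm_apply continuous_const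

theorem hessM_comp_mulVec {f : (κ → ℝ) → ℝ} (hf : ContDiff ℝ 2 f) (S : Matrix κ ι ℝ)
    (x : ι → ℝ) :
    hessM (fun y ↦ f (S *ᵥ y)) x = Sᵀ * hessM f (S *ᵥ x) * S := by
  let L : (ι → ℝ) →L[ℝ] (κ → ℝ) := LinearMap.toContinuousLinearMap (Matrix.toLin' S)
  have hfL : ContDiff ℝ 2 (f ∘ L) := hf.comp L.contDiff
  change hessM (f ∘ L) x = _
  rw [hessM_eq_toMatrix₂' hfL, hessM_eq_toMatrix₂' hf, LinearMap.mul_toMatrix₂'_mul,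
    Matrix.transpose_transpose]
  exact congrArg _ (LinearMap.ext₂ (fderiv_fderiv_comp_clm hf L x))

end Hessian

open scoped Matrix.Norms.Operator in
theorem roberts_time_reversing_general {ι : Type} [Fintype ι] [DecidableEq ι]
    {J S : Matrix ι ι ℝ} (hS : IsUnit S.det) (hSJ : S * J * Sᵀ = -J)
    {Γ : (ι → ℝ) → ℝ} (hΓ : ContDiff ℝ 2 Γ) (hSinv : ∀ x, Γ (S *ᵥ x) = Γ x)
    {γ : ℝ → ι → ℝ} (hγ : Continuous γ) {c : ℝ} (hsym : ∀ s, γ (c - s) = S *ᵥ γ s)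
    {X : ℝ → Matrix ι ι ℝ} (hX0 : X 0 = 1)
    (hX : ∀ s i j, HasDerivAt (fun u ↦ X u i j) ((J * hessM Γ (γ s) * X s) i j) s) (s : ℝ) :
    X (c - s) = S * X s * S⁻¹ * X c := by
  have hHess : ∀ x, Sᵀ * hessM Γ (S *ᵥ x) * S = hessM Γ x := fun x ↦ by
    simp only [← hessM_comp_mulVec hΓ, hSinv]
  have hcont : Continuous fun s ↦ J * hessM Γ (γ s) :=
    continuous_const.matrix_mul ((continuous_hessM hΓ).comp hγ)
  have hrev : ∀ s, S * (J * hessM Γ (γ s)) = -(J * hessM Γ (γ (c - s)) * S) := fun s ↦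
    calc S * (J * hessM Γ (γ s))
        = S * J * Sᵀ * hessM Γ (S *ᵥ γ s) * S := by
          simp only [← hHess (γ s), Matrix.mul_assoc]
      _ = -(J * hessM Γ (γ (c - s)) * S) := by rw [hSJ, hsym, neg_mul, neg_mul]
  exact apply_const_sub_eq_of_time_reversing hcont (fun s ↦ hasDerivAt_matrix.2 (hX s)) hX0
    (S.mul_nonsing_inv hS) hrev s

/-- Roberts' Lemma 2.4: if `γ` is a `T`-periodic solution of `ẋ = J∇Γ(x)` and `S` is an
orthogonal matrix with `γ(−s + T/N) = Sγ(s)`, `Γ(Sx) = Γ(x)`, and `SJ = −JS`, then the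
fundamental matrix solution `X` of the linearization along `γ` satisfies
`X(−s + T/N) = S X(s) Sᵀ X(T/N)` for all `s`. -/
theorem roberts_time_reversing (n N : ℕ) (hn : 1 ≤ n) (hN : 1 ≤ N) (T : ℝ) (hT : 0 < T)
    (Γ : ((Fin n ⊕ Fin n) → ℝ) → ℝ) (hΓ : ContDiff ℝ 2 Γ)
    (γ : ℝ → (Fin n ⊕ Fin n) → ℝ)
    (hsol : ∀ s : ℝ, HasDerivAt γ ((stdJ n).mulVec (gradV Γ (γ s))) s)
    (hper : ∀ s : ℝ, γ (s + T) = γ s)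
    (S : Matrix (Fin n ⊕ Fin n) (Fin n ⊕ Fin n) ℝ)
    (hsym : ∀ s : ℝ, γ (-s + T / N) = S.mulVec (γ s))
    (hSinv : ∀ x, Γ (S.mulVec x) = Γ x)
    (hSJ : S * stdJ n = -(stdJ n * S))
    (horth : Sᵀ * S = 1)
    (X : ℝ → Matrix (Fin n ⊕ Fin n) (Fin n ⊕ Fin n) ℝ)
    (hX0 : X 0 = 1)
    (hX : ∀ (s : ℝ) (i j : Fin n ⊕ Fin n),
      HasDerivAt (fun u => X u i j) ((stdJ n * hessM Γ (γ s) * X s) i j) s) :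
    ∀ s : ℝ, X (-s + T / N) = S * X s * Sᵀ * X (T / N) := by
  intro s
  have hγ : Continuous γ := continuous_iff_continuousAt.2 fun s ↦ (hsol s).continuousAt
  have hanti : S * stdJ n * Sᵀ = -stdJ n := by
    rw [hSJ, neg_mul, Matrix.mul_assoc, mul_eq_one_comm.1 horth, mul_one]
  rw [← Matrix.inv_eq_left_inv horth, neg_add_eq_sub]
  exact roberts_time_reversing_general (Matrix.isUnit_det_of_left_inverse horth) hanti hΓ hSinv hγ
    (fun s ↦ neg_add_eq_sub s (T / N) ▸ hsym s) hX0 hX s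
end
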